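/- arXiv:2509.23148 — 4 statements merged into one kernel-verified Lean document; each statement's English description precedes it below -/
import Mathlib

section
/- Let ω be a control on [0,T] and let ε > 0. Then there exist k ∈ ℕ and points 0 = t_0 < t_1 < ⋯ < t_k = T such that for every i < k one has ω(t_i+, t_{i+1}−) < ε, where ω(s+, t−) := sup{ ω(s+η, t−η) : 0 < η < (t−s)/2 } denotes the limit of ω(s+η, t−η) as η → 0+ (which exists and equals this supremum by monotonicity of controls). -/
/-- A control on `[0,T]`: nonnegative, vanishing on the diagonal, superadditive. -/
def IsControl (T : ℝ) (ω : ℝ → ℝ → ℝ) : Prop :=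
  (∀ s t : ℝ, 0 ≤ s → s ≤ t → t ≤ T → 0 ≤ ω s t) ∧
  (∀ t : ℝ, 0 ≤ t → t ≤ T → ω t t = 0) ∧
  (∀ s u t : ℝ, 0 ≤ s → s ≤ u → u ≤ t → t ≤ T → ω s u + ω u t ≤ ω s t)

/-- The two-sided open limit `ω(s+, t-) = sup {ω (s+η) (t-η) : 0 < η < (t-s)/2}`. -/
noncomputable def openLimit (ω : ℝ → ℝ → ℝ) (s t : ℝ) : ℝ :=
  sSup {r : ℝ | ∃ η : ℝ, 0 < η ∧ η < (t - s) / 2 ∧ r = ω (s + η) (t - η)}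

/-!
By superadditivity `ω u v ≤ ω 0 v - ω 0 u`, so it suffices to partition `[0, T]` into finitely many
intervals on whose interiors the monotone function `ω 0` oscillates by less than `ε / 2`. Such a
partition exists for every function with one-sided limits: the supremum of the points that can be
reached from `0` is itself reached because of the left limit there, and the right limit would allow
one further step if the supremum were less than `T`.
-/

open Set Filter Topology

section Chains

variable {α : Type*} [ConditionallyCompleteLinearOrder α] [TopologicalSpace α] [OrderTopology α]

theorem exists_relSeries_head_last_of_eventually_nhdsLT {r : SetRel α α} {a b : α} (hab : a ≤ b)
    (hright : ∀ x ∈ Ico a b, ∃ y ∈ Ioc x b, (x, y) ∈ r)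
    (hleft : ∀ x ∈ Ioc a b, ∀ᶠ z in 𝓝[<] x, (z, x) ∈ r) :
    ∃ p : RelSeries r, p.head = a ∧ p.last = b := by
  let reachable : Set α := {x | x ∈ Icc a b ∧ ∃ p : RelSeries r, p.head = a ∧ p.last = x}
  have extend {x y : α} (hx : x ∈ reachable) (hy : y ∈ Icc a b) (hxy : (x, y) ∈ r) :
      y ∈ reachable := by
    obtain ⟨-, p, hhead, rfl⟩ := hx
    exact ⟨hy, p.snoc y hxy, by rw [p.head_snoc, hhead], p.last_snoc y hxy⟩
  have ha : a ∈ reachable := ⟨left_mem_Icc.2 hab, .singleton r a, rfl, rfl⟩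
  have hbdd : BddAbove reachable := ⟨b, fun _ hx ↦ hx.1.2⟩
  have hlub : IsLUB reachable (sSup reachable) := isLUB_csSup ⟨a, ha⟩ hbdd
  set c := sSup reachable
  have hc : c ∈ Icc a b := ⟨hlub.1 ha, hlub.2 fun _ hx ↦ hx.1.2⟩
  have hc_reachable : c ∈ reachable := by
    rcases hc.1.eq_or_lt with hac | hac
    · rwa [← hac]
    have hfreq := hlub.frequently_mem ⟨a, ha⟩
    rw [← nhdsLT_sup_nhdsWithin_singleton, frequently_sup] at hfreq
    rcases hfreq with hlt | heq
    · obtain ⟨z, hz, hzc⟩ := (hlt.and_eventually (hleft c ⟨hac, hc.2⟩)).exists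
      exact extend hz hc hzc
    · simpa using heq
  have hcb : c = b := by
    by_contra hne
    obtain ⟨y, ⟨hcy, hyb⟩, hr⟩ := hright c ⟨hc.1, hc.2.lt_of_ne hne⟩
    exact hcy.not_ge (hlub.1 (extend hc_reachable ⟨hc.1.trans hcy.le, hyb⟩ hr))
  exact hcb ▸ hc_reachable.2

end Chains

section Oscillation

variable {α E : Type*} [PseudoMetricSpace E]

/-- The pairs `s < t` such that the values of `f` on the open interval `(s, t)` are pairwise at
distance less than `ε`. A `RelSeries` of this relation is a finite partition on the open cells of
which `f` oscillates little. -/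
def smallOscillation [Preorder α] (f : α → E) (ε : ℝ) : SetRel α α :=
  {(s, t) : α × α | s < t ∧ ∀ u ∈ Ioo s t, ∀ v ∈ Ioo s t, dist (f u) (f v) < ε}

theorem exists_mem_forall_dist_lt_of_tendsto {l : Filter α} {f : α → E} {c : E}
    (hf : Tendsto f l (𝓝 c)) {ε : ℝ} (hε : 0 < ε) :
    ∃ s ∈ l, ∀ u ∈ s, ∀ v ∈ s, dist (f u) (f v) < ε := by
  refine ⟨f ⁻¹' Metric.ball c (ε / 2), hf (Metric.ball_mem_nhds c (half_pos hε)), ?_⟩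
  intro u hu v hv
  calc dist (f u) (f v) ≤ dist (f u) c + dist (f v) c := dist_triangle_right _ _ _
    _ < ε / 2 + ε / 2 := add_lt_add hu hv
    _ = ε := add_halves ε

theorem exists_relSeries_smallOscillation [ConditionallyCompleteLinearOrder α]
    [TopologicalSpace α] [OrderTopology α] {f : α → E} {a b : α} (hab : a ≤ b)
    (hright : ∀ x ∈ Ico a b, ∃ c, Tendsto f (𝓝[>] x) (𝓝 c))
    (hleft : ∀ x ∈ Ioc a b, ∃ c, Tendsto f (𝓝[<] x) (𝓝 c)) {ε : ℝ} (hε : 0 < ε) :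
    ∃ p : RelSeries (smallOscillation f ε), p.head = a ∧ p.last = b := by
  refine exists_relSeries_head_last_of_eventually_nhdsLT hab (fun x hx ↦ ?_) (fun x hx ↦ ?_)
  · obtain ⟨c, hc⟩ := hright x hx
    obtain ⟨s, hs, hosc⟩ := exists_mem_forall_dist_lt_of_tendsto hc hε
    obtain ⟨y, hy, hsub⟩ := (mem_nhdsGT_iff_exists_mem_Ioc_Ioo_subset hx.2).1 hs
    exact ⟨y, hy, hy.1, fun u hu v hv ↦ hosc u (hsub hu) v (hsub hv)⟩
  · obtain ⟨c, hc⟩ := hleft x hx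
    obtain ⟨s, hs, hosc⟩ := exists_mem_forall_dist_lt_of_tendsto hc hε
    obtain ⟨y, hy, hsub⟩ := (mem_nhdsLT_iff_exists_mem_Ico_Ioo_subset hx.1).1 hs
    filter_upwards [Ioo_mem_nhdsLT hy.2] with z hz
    have hsub' : Ioo z x ⊆ s := (Ioo_subset_Ioo_left hz.1.le).trans hsub
    exact ⟨hz.2, fun u hu v hv ↦ hosc u (hsub' hu) v (hsub' hv)⟩

end Oscillation

section MonotoneOn

variable {α β : Type*} [LinearOrder α] [DenselyOrdered α] [TopologicalSpace α] [OrderTopology α]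
  [ConditionallyCompleteLinearOrder β] [TopologicalSpace β] [OrderTopology β]
  {f : α → β} {a b x : α}

theorem exists_tendsto_nhdsGT_of_monotoneOn_Icc (hf : MonotoneOn f (Icc a b)) (hx : x ∈ Ico a b) :
    ∃ c, Tendsto f (𝓝[>] x) (𝓝 c) := by
  have hsub : Ioo x b ⊆ Icc a b := fun u hu ↦ ⟨hx.1.trans hu.1.le, hu.2.le⟩
  have hbdd : BddBelow (f '' Ioo x b) := by
    refine ⟨f x, ?_⟩
    rintro _ ⟨u, hu, rfl⟩
    exact hf (Ico_subset_Icc_self hx) (hsub hu) hu.1.le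
  exact ⟨_, (hf.mono hsub).tendsto_nhdsWithin_Ioo_right (nonempty_Ioo.2 hx.2) hbdd⟩

theorem exists_tendsto_nhdsLT_of_monotoneOn_Icc (hf : MonotoneOn f (Icc a b)) (hx : x ∈ Ioc a b) :
    ∃ c, Tendsto f (𝓝[<] x) (𝓝 c) := by
  have hsub : Ioo a x ⊆ Icc a b := fun u hu ↦ ⟨hu.1.le, hu.2.le.trans hx.2⟩
  have hbdd : BddAbove (f '' Ioo a x) := by
    refine ⟨f x, ?_⟩
    rintro _ ⟨u, hu, rfl⟩
    exact hf (hsub hu) (Ioc_subset_Icc_self hx) hu.2.le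
  exact ⟨_, (hf.mono hsub).tendsto_nhdsWithin_Ioo_left (nonempty_Ioo.2 hx.1) hbdd⟩

end MonotoneOn

section Control

variable {ω : ℝ → ℝ → ℝ} {T a s t u v c : ℝ}

theorem IsControl.le_sub (hω : IsControl T ω) (hs : 0 ≤ s) (hsu : s ≤ u) (huv : u ≤ v)
    (hv : v ≤ T) : ω u v ≤ ω s v - ω s u :=
  le_sub_iff_add_le'.2 (hω.2.2 s u v hs hsu huv hv)

theorem IsControl.monotoneOn (hω : IsControl T ω) (hs : 0 ≤ s) : MonotoneOn (ω s) (Icc s T) :=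
  fun u hu v hv huv ↦ sub_nonneg.1 <|
    (hω.1 u v (hs.trans hu.1) huv hv.2).trans (hω.le_sub hs hu.1 huv hv.2)

theorem openLimit_le (hst : s < t) (h : ∀ u ∈ Ioo s t, ∀ v ∈ Ioo s t, u ≤ v → ω u v ≤ c) :
    openLimit ω s t ≤ c := by
  refine csSup_le ⟨_, (t - s) / 4, by linarith, by linarith, rfl⟩ ?_
  rintro _ ⟨η, hη, hη', rfl⟩
  exact h _ ⟨by linarith, by linarith⟩ _ ⟨by linarith, by linarith⟩ (by linarith)

theorem IsControl.openLimit_le_of_mem_smallOscillation (hω : IsControl T ω) (ha : 0 ≤ a)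
    (has : a ≤ s) (ht : t ≤ T) (hst : (s, t) ∈ smallOscillation (ω a) c) : openLimit ω s t ≤ c := by
  refine openLimit_le hst.1 fun u hu v hv huv ↦ ?_
  calc ω u v ≤ ω a v - ω a u := hω.le_sub ha (has.trans hu.1.le) huv (hv.2.le.trans ht)
    _ ≤ dist (ω a v) (ω a u) := le_abs_self _
    _ ≤ c := (hst.2 v hv u hu).le

end Control

/-- for any control `ω` on `[0,T]` and any `ε > 0`, there is a finite
partition `0 = t₀ < t₁ < ⋯ < t_k = T` such that `ω(tᵢ+, tᵢ₊₁-) < ε` for all `i < k`. -/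
theorem control_partition_small_open_limits (T : ℝ) (hT : 0 < T)
    (ω : ℝ → ℝ → ℝ) (hω : IsControl T ω) (ε : ℝ) (hε : 0 < ε) :
    ∃ (k : ℕ) (t : Fin (k + 1) → ℝ), StrictMono t ∧ t 0 = 0 ∧ t (Fin.last k) = T ∧
      ∀ i : Fin k, openLimit ω (t i.castSucc) (t i.succ) < ε := by
  have hmono : MonotoneOn (ω 0) (Icc 0 T) := hω.monotoneOn le_rfl
  obtain ⟨p, hhead, hlast⟩ := exists_relSeries_smallOscillation hT.le
    (fun x ↦ exists_tendsto_nhdsGT_of_monotoneOn_Icc hmono)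
    (fun x ↦ exists_tendsto_nhdsLT_of_monotoneOn_Icc hmono) (half_pos hε)
  have hp : StrictMono p := Fin.strictMono_iff_lt_succ.2 fun i ↦ (p.step i).1
  refine ⟨p.length, p, hp, hhead, hlast, fun i ↦ ?_⟩
  have hnonneg : 0 ≤ p i.castSucc := hhead.ge.trans (hp.monotone (Fin.zero_le _))
  have hle : p i.succ ≤ T := (hp.monotone (Fin.le_last _)).trans hlast.le
  exact (hω.openLimit_le_of_mem_smallOscillation le_rfl hnonneg hle (p.step i)).trans_lt
    (half_lt_self hε)
end

section
/- (Generalized sewing lemma: existence and additivity.) Let T > 0, e ≥ 1, and let Ξ : Δ_T → ℝ^e. Suppose there are n ∈ ℕ, controls ω_{1,j}, ω_{2,j} on [0,T], and exponents α_{1,j}, α_{2,j} > 0 with α_{1,j} + α_{2,j} > 1 for j = 1,…,n, such that ‖Ξ_{s,t} − Ξ_{s,u} − Ξ_{u,t}‖ ≤ Σ_{j=1}^n ω_{1,j}(s,u)^{α_{1,j}} ω_{2,j}(u,t)^{α_{2,j}} for all 0 ≤ s ≤ u ≤ t ≤ T. Then there exists a map IΞ : Δ_T → ℝ^e such that: (i)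 for every (s,t) ∈ Δ_T with s < t, the Riemann sums Σ_{[u,v]∈P} Ξ_{u,v} over finite partitions P of [s,t] converge to IΞ_{s,t} in the Refinement Riemann–Stieltjes (RRS) sense, and this RRS-limit is unique; (ii) IΞ_{t,t} = 0; and (iii) IΞ is additive: IΞ_{s,t} = IΞ_{s,u} + IΞ_{u,t} for all 0 ≤ s ≤ u ≤ t ≤ T. -/
/-- A finite partition `s = u₀ < u₁ < ⋯ < u_k = t` of `[s,t]`. -/
def IsPartition (s t : ℝ) (k : ℕ) (u : Fin (k + 1) → ℝ) : Prop :=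
  StrictMono u ∧ u 0 = s ∧ u (Fin.last k) = t

/-- The Riemann sum `Σ_{i<k} Ξ_{uᵢ, uᵢ₊₁}` of a two-parameter map over a partition. -/
noncomputable def riemannSum {e : ℕ} (Ξ : ℝ → ℝ → Fin e → ℝ) (k : ℕ)
    (u : Fin (k + 1) → ℝ) : Fin e → ℝ :=
  ∑ i : Fin k, Ξ (u i.castSucc) (u i.succ)

/-- Refinement Riemann–Stieltjes convergence of the Riemann sums of `Ξ` on `[s,t]`
to the limit `K`: for every `ε > 0` there is a partition of `[s,t]` such that the
Riemann sum over any refinement of it is within `ε` of `K`. -/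
def RRSLim {e : ℕ} (Ξ : ℝ → ℝ → Fin e → ℝ) (s t : ℝ) (K : Fin e → ℝ) : Prop :=
  ∀ ε : ℝ, 0 < ε → ∃ (k : ℕ) (u : Fin (k + 1) → ℝ), IsPartition s t k u ∧
    ∀ (m : ℕ) (v : Fin (m + 1) → ℝ), IsPartition s t m v → Set.range u ⊆ Set.range v →
      ‖riemannSum Ξ m v - K‖ < ε

/-!
Riemann sums over partitions are replaced by sums over the points of a finite set `F ⊆ ℝ`; RRS
convergence is then convergence along the directed set of all finite sets, and these sums are
exactly additive in the interval.

Let `ω` be the sum of all given controls. If one of the two factors of each term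
`ω₁ⱼ(s,u)^α₁ⱼ ω₂ⱼ(u,t)^α₂ⱼ` is small, the term is at most `κ ω(s,t)^θ` with a fixed `θ > 1` and
`κ` small. Controls need not be continuous, but by monotonicity their one-sided limits exist, so
near each point `p`, on either side of it, one of `ω(s,u)`, `ω(u,t)` is small. On such one-sided
neighbourhoods the classical sewing estimate, by bisection of `ω`, gives
`‖∑ Ξ - Ξ_{s,t}‖ ≤ C κ ω(s,t)^θ`. A supremum argument chains these neighbourhoods together: as
`ω^θ` is superadditive the errors add up to at most `C κ ω(s,t)^θ` on the whole interval, and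
`κ → 0` makes the sums Cauchy.
-/

open Filter Set Topology

section Generalities

theorem exists_tendsto_of_forall_exists_eventually_norm_sub_le {ι E : Type*}
    [SeminormedAddCommGroup E] [CompleteSpace E] {l : Filter ι} [l.NeBot] {f : ι → E}
    (h : ∀ ε > 0, ∃ K, ∀ᶠ i in l, ‖f i - K‖ ≤ ε) : ∃ K, Tendsto f l (𝓝 K) := by
  refine cauchy_map_iff_exists_tendsto.1 (Metric.cauchy_iff.2 ⟨inferInstance, fun ε hε => ?_⟩)
  obtain ⟨K, hK⟩ := h (ε / 3) (by positivity)
  refine ⟨Metric.closedBall K (ε / 3), ?_, fun x hx y hy => ?_⟩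
  · exact hK.mono fun i hi => mem_closedBall_iff_norm.2 hi
  · linarith [dist_triangle_right x y K, Metric.mem_closedBall.1 hx, Metric.mem_closedBall.1 hy]

theorem interval_induction_of_eventually {α : Type*} [ConditionallyCompleteLinearOrder α]
    [TopologicalSpace α] [OrderTopology α] [DenselyOrdered α] {a b : α} {Q : α → α → Prop}
    (htrans : ∀ x y z, a ≤ x → x ≤ y → y ≤ z → z ≤ b → Q x y → Q y z → Q x z)
    (hrefl : Q a a)
    (hleft : ∀ p ∈ Ioc a b, ∀ᶠ x in 𝓝[<] p, Q x p)
    (hright : ∀ p ∈ Ico a b, ∀ᶠ y in 𝓝[>] p, Q p y) (hab : a ≤ b) : Q a b := by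
  set A := {x | x ∈ Icc a b ∧ Q a x}
  have haA : a ∈ A := ⟨left_mem_Icc.2 hab, hrefl⟩
  have hlub : IsLUB A (sSup A) := isLUB_csSup ⟨a, haA⟩ ⟨b, fun x hx => hx.1.2⟩
  set c := sSup A
  have hac : a ≤ c := hlub.1 haA
  have hcb : c ≤ b := hlub.2 fun x hx => hx.1.2
  have hcA : c ∈ A := by
    by_contra hc
    have hA_lt : ∀ x ∈ A, x < c := fun x hx => (hlub.1 hx).lt_of_ne fun h => hc (h ▸ hx)
    have := mem_closure_iff_nhdsWithin_neBot.1 (hlub.mem_closure ⟨a, haA⟩)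
    obtain ⟨x, hxc, hxA⟩ := (((hleft c ⟨hA_lt a haA, hcb⟩).filter_mono
      (nhdsWithin_mono c hA_lt)).and self_mem_nhdsWithin).exists
    exact hc ⟨⟨hac, hcb⟩, htrans a x c le_rfl hxA.1.1 (hA_lt x hxA).le hcb hxA.2 hxc⟩
  rcases hcb.eq_or_lt with hcb | hcb
  · exact hcb ▸ hcA.2
  · have := nhdsGT_neBot_of_exists_gt ⟨b, hcb⟩
    obtain ⟨y, hcy, hy⟩ := ((hright c ⟨hac, hcb⟩).and (Ioo_mem_nhdsGT hcb)).exists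
    have hyA : y ∈ A := ⟨⟨hac.trans hy.1.le, hy.2.le⟩,
      htrans a c y le_rfl hac hy.1.le hy.2.le hcA.2 hcy⟩
    exact absurd (hlub.1 hyA) hy.1.not_ge

theorem rpow_mul_rpow_le_of_min_le {x y A M δ a b η : ℝ} (hx : 0 ≤ x) (hy : 0 ≤ y) (hxA : x ≤ A)
    (hyA : y ≤ A) (hAM : A ≤ M) (hδ : min x y ≤ δ) (hη : 0 ≤ η) (ha : η ≤ a) (hb : η ≤ b)
    (hab : 1 + 2 * η ≤ a + b) :
    x ^ a * y ^ b ≤ M ^ (a + b - 1 - 2 * η) * δ ^ η * A ^ (1 + η) := by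
  wlog hxδ : x ≤ δ generalizing x y a b
  · have hyδ : y ≤ δ := (min_le_iff.1 hδ).resolve_left hxδ
    rw [mul_comm, add_comm a b]
    exact this hy hx hyA hxA (min_le_of_left_le hyδ) hb ha (by linarith) hyδ
  have hA : 0 ≤ A := hx.trans hxA
  have hδ0 : 0 ≤ δ := hx.trans hxδ
  calc x ^ a * y ^ b = x ^ η * x ^ (a - η) * y ^ b := by
        rw [← Real.rpow_add_of_nonneg hx hη (by linarith), add_sub_cancel]
    _ ≤ δ ^ η * A ^ (a - η) * A ^ b := by gcongr; linarith
    _ = A ^ (a + b - 1 - 2 * η) * δ ^ η * A ^ (1 + η) := by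
        rw [mul_assoc, mul_comm _ (δ ^ η), mul_assoc,
          ← Real.rpow_add_of_nonneg hA (by linarith) (by linarith),
          ← Real.rpow_add_of_nonneg hA (by linarith) (by linarith)]
        ring_nf
    _ ≤ M ^ (a + b - 1 - 2 * η) * δ ^ η * A ^ (1 + η) := by
        gcongr
        linarith

theorem exists_uniform_exponent_gap {ι : Type*} [Finite ι] {α β : ι → ℝ} (hα : ∀ j, 0 < α j)
    (hβ : ∀ j, 0 < β j) (hαβ : ∀ j, 1 < α j + β j) :
    ∃ η > 0, ∀ j, η ≤ α j ∧ η ≤ β j ∧ 1 + 2 * η ≤ α j + β j := by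
  obtain ⟨η, hη, hlt⟩ := Pi.exists_forall_pos_add_lt (x := 0)
    (y := fun j => min (α j) (min (β j) ((α j + β j - 1) / 2)))
    fun j => lt_min (hα j) (lt_min (hβ j) (by simpa using hαβ j))
  refine ⟨η, hη, fun j => ?_⟩
  have hj := hlt j
  simp only [Pi.zero_apply, zero_add, lt_min_iff] at hj
  exact ⟨hj.1.le, hj.2.1.le, by linarith [hj.2.2]⟩

theorem exists_pos_mul_rpow_le (D : ℝ) {η κ : ℝ} (hη : 0 < η) (hκ : 0 < κ) :
    ∃ δ > 0, D * δ ^ η ≤ κ := by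
  have hcont : ContinuousAt (fun δ : ℝ => D * δ ^ η) 0 :=
    (Real.continuousAt_rpow_const 0 η (.inr hη.le)).const_mul D
  have hlim : Tendsto (fun δ : ℝ => D * δ ^ η) (𝓝[>] 0) (𝓝 0) := by
    simpa [Real.zero_rpow hη.ne'] using hcont.tendsto.mono_left nhdsWithin_le_nhds
  obtain ⟨δ, hδκ, hδ⟩ := ((hlim.eventually_le_const hκ).and self_mem_nhdsWithin).exists
  exact ⟨δ, hδ, hδκ⟩

end Generalities

section GridSum

variable {α E : Type*} [LinearOrder α]

/-- The successor of `x` among the points of the finite set `F`; by convention it is `x` itself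
when no point of `F` lies to the right of `x`. -/
noncomputable def gridSucc (F : Finset α) (x : α) : α :=
  ({y ∈ F | x < y} : Finset α).min.untopD x

theorem isLeast_gridSucc {F : Finset α} {x y : α} (hy : y ∈ F) (hxy : x < y) :
    IsLeast {z | z ∈ F ∧ x < z} (gridSucc F x) := by
  have hne : ({y ∈ F | x < y} : Finset α).Nonempty := ⟨y, Finset.mem_filter.2 ⟨hy, hxy⟩⟩
  rw [gridSucc, ← Finset.coe_min' hne, WithTop.untopD_coe, ← Finset.coe_filter]
  exact Finset.isLeast_min' _ hne

/-- The Riemann sum of `Ξ` over the cells of the grid `F` whose left end point lies in `[s, t)`.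
When `s` and `t` belong to `F`, this is the Riemann sum over the partition `F ∩ [s, t]`; having
`F` independent of the interval makes the sum additive in the interval. -/
noncomputable def gridSum [AddCommMonoid E] (Ξ : α → α → E) (F : Finset α) (s t : α) : E :=
  ∑ x ∈ F with s ≤ x ∧ x < t, Ξ x (gridSucc F x)

section AddCommMonoid

variable [AddCommMonoid E] (Ξ : α → α → E) (F : Finset α)

theorem gridSum_self (s : α) : gridSum Ξ F s s = 0 := by
  rw [gridSum, Finset.filter_false_of_mem fun x _ h => h.1.not_gt h.2, Finset.sum_empty]

theorem gridSum_add_gridSum {s u t : α} (hsu : s ≤ u) (hut : u ≤ t) :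
    gridSum Ξ F s u + gridSum Ξ F u t = gridSum Ξ F s t := by
  rw [gridSum, gridSum, gridSum, ← Finset.sum_union]
  · congr 1
    grind
  · grind [Finset.disjoint_left]

variable {F}

theorem gridSum_gridSucc {x y : α} (hx : x ∈ F) (hy : y ∈ F) (hxy : x < y) :
    gridSum Ξ F x (gridSucc F x) = Ξ x (gridSucc F x) := by
  obtain ⟨⟨-, hlt⟩, hmin⟩ := isLeast_gridSucc hy hxy
  have hfilter : ({z ∈ F | x ≤ z ∧ z < gridSucc F x} : Finset α) = {x} := by
    ext z
    rw [Finset.mem_filter, Finset.mem_singleton]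
    refine ⟨fun ⟨hz, hxz, hz'⟩ => ?_, ?_⟩
    · exact (hxz.eq_of_not_lt fun h => (hmin ⟨hz, h⟩).not_gt hz').symm
    · rintro rfl
      exact ⟨hx, le_rfl, hlt⟩
  rw [gridSum, hfilter, Finset.sum_singleton]

end AddCommMonoid

theorem norm_gridSum_sub_le_of_gridSucc [SeminormedAddCommGroup E] {Ξ : α → α → E}
    {F : Finset α} {x a b y : α} (ha : a ∈ F) (hy : y ∈ F) (hxa : x ≤ a) (hay : a < y)
    (hb : gridSucc F a = b) {r d : ℝ} (hleft : ‖gridSum Ξ F x a - Ξ x a‖ ≤ r)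
    (hright : ‖gridSum Ξ F b y - Ξ b y‖ ≤ r) (hdefect_a : ‖Ξ x y - Ξ x a - Ξ a y‖ ≤ d)
    (hdefect_b : ‖Ξ a y - Ξ a b - Ξ b y‖ ≤ d) :
    ‖gridSum Ξ F x y - Ξ x y‖ ≤ 2 * r + 2 * d := by
  subst hb
  obtain ⟨⟨-, hlt⟩, hmin⟩ := isLeast_gridSucc hy hay
  set b := gridSucc F a
  have hsplit : gridSum Ξ F x y - Ξ x y =
      (gridSum Ξ F x a - Ξ x a) + (gridSum Ξ F b y - Ξ b y)
        - (Ξ x y - Ξ x a - Ξ a y) - (Ξ a y - Ξ a b - Ξ b y) := by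
    rw [← gridSum_add_gridSum Ξ F hxa hay.le, ← gridSum_add_gridSum Ξ F hlt.le (hmin ⟨hy, hay⟩),
      gridSum_gridSucc Ξ ha hy hay]
    abel
  calc ‖gridSum Ξ F x y - Ξ x y‖ ≤ r + r + d + d := by
        rw [hsplit]
        exact norm_sub_le_of_le
          (norm_sub_le_of_le (norm_add_le_of_le hleft hright) hdefect_a) hdefect_b
    _ = 2 * r + 2 * d := by ring

end GridSum

section RefinementLimit

namespace IsPartition

variable {s t : ℝ} {m : ℕ} {v : Fin (m + 1) → ℝ}

theorem mem_Icc (hv : IsPartition s t m v) (i : Fin (m + 1)) : v i ∈ Icc s t :=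
  ⟨hv.2.1 ▸ hv.1.monotone (Fin.zero_le i), hv.2.2 ▸ hv.1.monotone (Fin.le_last i)⟩

theorem gridSucc_castSucc (hv : IsPartition s t m v) {F : Finset ℝ}
    (hF : range v = ↑F ∩ Icc s t) (i : Fin m) : gridSucc F (v i.castSucc) = v i.succ := by
  have hmem : ∀ j, v j ∈ F := fun j => (hF ▸ mem_range_self j : v j ∈ ↑F ∩ Icc s t).1
  have hlt : v i.castSucc < v i.succ := hv.1 Fin.castSucc_lt_succ
  refine (isLeast_gridSucc (hmem i.succ) hlt).unique ⟨⟨hmem i.succ, hlt⟩, fun z ⟨hzF, hz⟩ => ?_⟩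
  rcases le_or_gt z t with hzt | htz
  · obtain ⟨j, rfl⟩ : z ∈ range v := hF ▸ ⟨hzF, (hv.mem_Icc _).1.trans hz.le, hzt⟩
    exact hv.1.monotone (Fin.castSucc_lt_iff_succ_le.1 (hv.1.lt_iff_lt.1 hz))
  · exact (hv.mem_Icc _).2.trans htz.le

theorem sum_eq_gridSum {E : Type*} [AddCommMonoid E] (hv : IsPartition s t m v) {F : Finset ℝ}
    (hF : range v = ↑F ∩ Icc s t) (Ξ : ℝ → ℝ → E) :
    ∑ i : Fin m, Ξ (v i.castSucc) (v i.succ) = gridSum Ξ F s t := by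
  refine Finset.sum_nbij (fun i => v i.castSucc) (fun i _ => ?_)
    (fun i _ j _ h => Fin.castSucc_injective m (hv.1.injective h)) (fun x hx => ?_)
    (fun i _ => by rw [hv.gridSucc_castSucc hF i])
  · have hmem : v i.castSucc ∈ ↑F ∩ Icc s t := hF ▸ mem_range_self _
    exact Finset.mem_filter.2 ⟨hmem.1, hmem.2.1, hv.2.2 ▸ hv.1 (Fin.castSucc_lt_last i)⟩
  · obtain ⟨hxF, hsx, hxt⟩ := Finset.mem_filter.1 hx
    obtain ⟨i, rfl⟩ : x ∈ range v := hF ▸ ⟨hxF, hsx, hxt.le⟩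
    rw [← hv.2.2, hv.1.lt_iff_lt] at hxt
    exact ⟨i.castPred hxt.ne, Finset.mem_coe.2 (Finset.mem_univ _), by simp⟩

end IsPartition

theorem exists_isPartition_range_eq {F : Finset ℝ} {s t : ℝ} (hst : s ≤ t) (hs : s ∈ F)
    (ht : t ∈ F) :
    ∃ (m : ℕ) (v : Fin (m + 1) → ℝ), IsPartition s t m v ∧ range v = ↑F ∩ Icc s t := by
  set G : Finset ℝ := {x ∈ F | x ∈ Icc s t} with hG
  have hcard : G.card = G.card - 1 + 1 :=
    (Nat.sub_add_cancel (Finset.card_pos.2 ⟨s, by simp [hG, hs, hst]⟩)).symm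
  set v := G.orderEmbOfFin hcard
  have hrange : range v = ↑F ∩ Icc s t := by
    rw [Finset.range_orderEmbOfFin, hG, Finset.coe_filter]
    rfl
  have hmem : ∀ i, v i ∈ Icc s t := fun i => (hrange ▸ mem_range_self i : v i ∈ ↑F ∩ Icc s t).2
  refine ⟨_, v, ⟨v.strictMono, ?_, ?_⟩, hrange⟩
  · obtain ⟨i, hi⟩ : s ∈ range v := hrange ▸ ⟨hs, left_mem_Icc.2 hst⟩
    exact (hmem _).1.antisymm' (hi ▸ v.monotone (Fin.zero_le i))
  · obtain ⟨i, hi⟩ : t ∈ range v := hrange ▸ ⟨ht, right_mem_Icc.2 hst⟩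
    exact (hmem _).2.antisymm (hi ▸ v.monotone (Fin.le_last i))

/-- Refinement Riemann–Stieltjes convergence on `[s, t]` of the Riemann sums of a map with values
in a normed group. For `E = Fin e → ℝ` this is `RRSLim` by definition. -/
def HasRefinementLimit {E : Type*} [SeminormedAddCommGroup E] (Ξ : ℝ → ℝ → E) (s t : ℝ)
    (K : E) : Prop :=
  ∀ ε : ℝ, 0 < ε → ∃ (k : ℕ) (u : Fin (k + 1) → ℝ), IsPartition s t k u ∧
    ∀ (m : ℕ) (v : Fin (m + 1) → ℝ), IsPartition s t m v → range u ⊆ range v →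
      ‖∑ i : Fin m, Ξ (v i.castSucc) (v i.succ) - K‖ < ε

theorem hasRefinementLimit_iff_tendsto_gridSum {E : Type*} [SeminormedAddCommGroup E]
    {Ξ : ℝ → ℝ → E} {s t : ℝ} (hst : s ≤ t) {K : E} :
    HasRefinementLimit Ξ s t K ↔ Tendsto (fun F => gridSum Ξ F s t) atTop (𝓝 K) := by
  rw [Metric.tendsto_atTop]
  refine forall₂_congr fun ε _ => ⟨?_, ?_⟩
  · rintro ⟨k, u, hu, hlim⟩
    refine ⟨Finset.univ.image u, fun F huF => ?_⟩
    have hmem : ∀ i, u i ∈ F := fun i => huF (Finset.mem_image_of_mem u (Finset.mem_univ i))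
    obtain ⟨m, v, hv, hvF⟩ :=
      exists_isPartition_range_eq hst (hu.2.1 ▸ hmem 0) (hu.2.2 ▸ hmem (Fin.last k))
    rw [dist_eq_norm, ← hv.sum_eq_gridSum hvF]
    exact hlim m v hv (hvF ▸ range_subset_iff.2 fun i => ⟨hmem i, hu.mem_Icc i⟩)
  · rintro ⟨F₀, hlim⟩
    obtain ⟨k, u, hu, huF⟩ :=
      exists_isPartition_range_eq (F := insert s (insert t F₀)) hst (by simp) (by simp)
    refine ⟨k, u, hu, fun m v hv huv => ?_⟩
    have hvF : range v = ↑(F₀ ∪ Finset.univ.image v) ∩ Icc s t := by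
      refine Subset.antisymm (range_subset_iff.2 fun i => ⟨by simp, hv.mem_Icc i⟩) ?_
      rintro x ⟨hx, hxst⟩
      rcases Finset.mem_union.1 (Finset.mem_coe.1 hx) with hx | hx
      · exact huv (huF ▸ ⟨by simp [hx], hxst⟩)
      · simpa using hx
    rw [hv.sum_eq_gridSum hvF, ← dist_eq_norm]
    exact hlim _ Finset.subset_union_left

end RefinementLimit

namespace IsControl

variable {T : ℝ} {ω : ℝ → ℝ → ℝ}

theorem nonneg (hω : IsControl T ω) {s t : ℝ} (hs : 0 ≤ s) (hst : s ≤ t) (ht : t ≤ T) :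
    0 ≤ ω s t :=
  hω.1 s t hs hst ht

theorem self_eq_zero (hω : IsControl T ω) {t : ℝ} (ht0 : 0 ≤ t) (ht : t ≤ T) : ω t t = 0 :=
  hω.2.1 t ht0 ht

theorem add_le (hω : IsControl T ω) {s u t : ℝ} (hs : 0 ≤ s) (hsu : s ≤ u) (hut : u ≤ t)
    (ht : t ≤ T) : ω s u + ω u t ≤ ω s t :=
  hω.2.2 s u t hs hsu hut ht

theorem mono (hω : IsControl T ω) {a b c d : ℝ} (ha : 0 ≤ a) (hab : a ≤ b) (hbc : b ≤ c)
    (hcd : c ≤ d) (hd : d ≤ T) : ω b c ≤ ω a d := by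
  linarith [hω.add_le ha hab (hbc.trans hcd) hd, hω.add_le (ha.trans hab) hbc hcd hd,
    hω.nonneg ha hab (by linarith), hω.nonneg (by linarith) hcd hd]

theorem add {ω' : ℝ → ℝ → ℝ} (hω : IsControl T ω) (hω' : IsControl T ω') :
    IsControl T fun s t => ω s t + ω' s t := by
  refine ⟨fun s t hs hst ht => add_nonneg (hω.nonneg hs hst ht) (hω'.nonneg hs hst ht),
    fun t ht0 ht => by simp only [hω.self_eq_zero ht0 ht, hω'.self_eq_zero ht0 ht, add_zero],
    fun s u t hs hsu hut ht => ?_⟩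
  linarith [hω.add_le hs hsu hut ht, hω'.add_le hs hsu hut ht]

theorem sum {ι : Type*} (J : Finset ι) {w : ι → ℝ → ℝ → ℝ} (hw : ∀ j, IsControl T (w j)) :
    IsControl T fun s t => ∑ j ∈ J, w j s t := by
  refine ⟨fun s t hs hst ht => Finset.sum_nonneg fun j _ => (hw j).nonneg hs hst ht,
    fun t ht0 ht => Finset.sum_eq_zero fun j _ => (hw j).self_eq_zero ht0 ht,
    fun s u t hs hsu hut ht => ?_⟩
  rw [← Finset.sum_add_distrib]
  exact Finset.sum_le_sum fun j _ => (hw j).add_le hs hsu hut ht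

theorem const_mul (hω : IsControl T ω) {c : ℝ} (hc : 0 ≤ c) :
    IsControl T fun s t => c * ω s t := by
  refine ⟨fun s t hs hst ht => mul_nonneg hc (hω.nonneg hs hst ht),
    fun t ht0 ht => by simp only [hω.self_eq_zero ht0 ht, mul_zero], fun s u t hs hsu hut ht => ?_⟩
  rw [← mul_add]
  exact mul_le_mul_of_nonneg_left (hω.add_le hs hsu hut ht) hc

theorem rpow (hω : IsControl T ω) {θ : ℝ} (hθ : 1 ≤ θ) : IsControl T fun s t => ω s t ^ θ := by
  refine ⟨fun s t hs hst ht => Real.rpow_nonneg (hω.nonneg hs hst ht) θ,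
    fun t ht0 ht => by simp only [hω.self_eq_zero ht0 ht, Real.zero_rpow (by linarith : θ ≠ 0)],
    fun s u t hs hsu hut ht => ?_⟩
  have hsu0 := hω.nonneg hs hsu (hut.trans ht)
  have hut0 := hω.nonneg (hs.trans hsu) hut ht
  exact (Real.add_rpow_le_rpow_add hsu0 hut0 hθ).trans
    (Real.rpow_le_rpow (add_nonneg hsu0 hut0) (hω.add_le hs hsu hut ht) (by linarith))

theorem eventually_nhdsGT_min_le (hω : IsControl T ω) {p ε : ℝ} (hp : 0 ≤ p) (hpT : p < T)
    (hε : 0 < ε) :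
    ∀ᶠ r in 𝓝[>] p, ∀ s u t, p ≤ s → s ≤ u → u ≤ t → t ≤ r → min (ω s u) (ω u t) ≤ ε := by
  set A := ω p '' Ioc p T
  have hbdd : BddBelow A := ⟨0, forall_mem_image.2 fun r hr => hω.nonneg hp hr.1.le hr.2⟩
  obtain ⟨_, ⟨r₀, ⟨hpr₀, hr₀T⟩, rfl⟩, hr₀⟩ :=
    exists_lt_of_csInf_lt (⟨_, T, ⟨hpT, le_rfl⟩, rfl⟩ : A.Nonempty)
      (lt_add_of_pos_right (sInf A) hε)
  filter_upwards [Ioo_mem_nhdsGT hpr₀] with r hr s u t hps hsu hut htr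
  rcases (hps.trans hsu).eq_or_lt with rfl | hpu
  · obtain rfl := hps.antisymm hsu
    exact min_le_of_left_le ((hω.self_eq_zero hp hpT.le).trans_le hε.le)
  · have htr₀ : t ≤ r₀ := htr.trans hr.2.le
    have hinf : sInf A ≤ ω p u := csInf_le hbdd ⟨u, ⟨hpu, by linarith⟩, rfl⟩
    have hmono := hω.mono hp le_rfl (hpu.le.trans hut) htr₀ hr₀T
    have hadd := hω.add_le hp hpu.le hut (htr₀.trans hr₀T)
    exact min_le_of_right_le (by linarith)

theorem eventually_nhdsLT_min_le (hω : IsControl T ω) {p ε : ℝ} (hp : 0 < p) (hpT : p ≤ T)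
    (hε : 0 < ε) :
    ∀ᶠ r in 𝓝[<] p, ∀ s u t, r ≤ s → s ≤ u → u ≤ t → t ≤ p → min (ω s u) (ω u t) ≤ ε := by
  set A := (fun r => ω r p) '' Ico 0 p
  have hbdd : BddBelow A := ⟨0, forall_mem_image.2 fun r hr => hω.nonneg hr.1 hr.2.le hpT⟩
  obtain ⟨_, ⟨r₀, ⟨h0r₀, hr₀p⟩, rfl⟩, hr₀⟩ :=
    exists_lt_of_csInf_lt (⟨_, 0, ⟨le_rfl, hp⟩, rfl⟩ : A.Nonempty)
      (lt_add_of_pos_right (sInf A) hε)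
  filter_upwards [Ioo_mem_nhdsLT hr₀p] with r hr s u t hrs hsu hut htp
  rcases (hut.trans htp).eq_or_lt with rfl | hup
  · obtain rfl := htp.antisymm hut
    exact min_le_of_right_le ((hω.self_eq_zero hp.le hpT).trans_le hε.le)
  · have hr₀s : r₀ ≤ s := hr.1.le.trans hrs
    have hinf : sInf A ≤ ω u p := csInf_le hbdd ⟨u, ⟨by linarith, hup⟩, rfl⟩
    have hmono := hω.mono h0r₀ hr₀s (hsu.trans hup.le) le_rfl hpT
    have hadd := hω.add_le (h0r₀.trans hr₀s) hsu hup.le hpT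
    exact min_le_of_left_le (by linarith)

theorem exists_mem_le_half (hω : IsControl T ω) {F : Finset ℝ} {x y : ℝ} (hx0 : 0 ≤ x)
    (hxy : x < y) (hyT : y ≤ T) (hx : x ∈ F) (hy : y ∈ F) :
    ∃ a ∈ F, x ≤ a ∧ a < y ∧ ω x a ≤ ω x y / 2 ∧ ω (gridSucc F a) y ≤ ω x y / 2 := by
  have hhalf : 0 ≤ ω x y / 2 := div_nonneg (hω.nonneg hx0 hxy.le hyT) two_pos.le
  set G : Finset ℝ := {z ∈ F | x ≤ z ∧ z < y ∧ ω x z ≤ ω x y / 2}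
  have hxG : x ∈ G := Finset.mem_filter.2
    ⟨hx, le_rfl, hxy, (hω.self_eq_zero hx0 (hxy.le.trans hyT)).trans_le hhalf⟩
  set a := G.max' ⟨x, hxG⟩
  obtain ⟨haF, hxa, hay, haω⟩ := Finset.mem_filter.1 (G.max'_mem ⟨x, hxG⟩)
  obtain ⟨⟨hbF, hab⟩, hmin⟩ := isLeast_gridSucc hy hay
  refine ⟨a, haF, hxa, hay, haω, ?_⟩
  set b := gridSucc F a
  have hxb : x ≤ b := hxa.trans hab.le
  rcases (hmin ⟨hy, hay⟩ : b ≤ y).eq_or_lt with hby | hby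
  · rw [hby, hω.self_eq_zero (hx0.trans hxy.le) hyT]
    exact hhalf
  · have hbG : b ∉ G := fun hb => (G.le_max' b hb).not_gt hab
    have hxbω : ω x y / 2 < ω x b :=
      not_le.1 fun h => hbG (Finset.mem_filter.2 ⟨hbF, hxb, hby, h⟩)
    linarith [hω.add_le hx0 hxb hby.le hyT]

end IsControl

section SewingEstimate

/-- The constant of the sewing estimate: bisecting an interval with respect to `ω` costs two
defects and scales each half by `2 ^ (-θ)`, so the constant solves `2 ^ (1 - θ) * C + 2 = C`. -/
noncomputable def sewingConst (θ : ℝ) : ℝ := 2 / (1 - 2 ^ (1 - θ))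

theorem two_rpow_one_sub_lt_one {θ : ℝ} (hθ : 1 < θ) : (2 : ℝ) ^ (1 - θ) < 1 :=
  Real.rpow_lt_one_of_one_lt_of_neg one_lt_two (by linarith)

theorem sewingConst_pos {θ : ℝ} (hθ : 1 < θ) : 0 < sewingConst θ :=
  div_pos two_pos (sub_pos.2 (two_rpow_one_sub_lt_one hθ))

theorem two_mul_sewingConst_mul_half_rpow_add {θ : ℝ} (hθ : 1 < θ) {w : ℝ} (hw : 0 ≤ w) (κ : ℝ) :
    2 * (sewingConst θ * (κ * (w / 2) ^ θ)) + 2 * (κ * w ^ θ) =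
      sewingConst θ * (κ * w ^ θ) := by
  have hfix : 2 ^ (1 - θ) * sewingConst θ + 2 = sewingConst θ := by
    have hne : 1 - (2 : ℝ) ^ (1 - θ) ≠ 0 := (sub_pos.2 (two_rpow_one_sub_lt_one hθ)).ne'
    rw [sewingConst]
    field_simp
    ring
  have hhalf : 2 * (w / 2) ^ θ = 2 ^ (1 - θ) * w ^ θ := by
    rw [Real.div_rpow hw two_pos.le, Real.rpow_sub two_pos, Real.rpow_one]
    ring
  linear_combination sewingConst θ * κ * hhalf + κ * w ^ θ * hfix

variable {E : Type*} [SeminormedAddCommGroup E] {Ξ : ℝ → ℝ → E} {T θ : ℝ} {ω : ℝ → ℝ → ℝ}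

theorem norm_gridSum_sub_le (hω : IsControl T ω) {κ : ℝ} (hκ : 0 ≤ κ) (hθ : 1 < θ)
    {F : Finset ℝ} {p q : ℝ} (hp : 0 ≤ p) (hpq : p ≤ q) (hq : q ≤ T) (hpF : p ∈ F) (hqF : q ∈ F)
    (hΞ : ∀ s u t, p ≤ s → s ≤ u → u ≤ t → t ≤ q → ‖Ξ s t - Ξ s u - Ξ u t‖ ≤ κ * ω s t ^ θ) :
    ‖gridSum Ξ F p q - Ξ p q‖ ≤ sewingConst θ * (κ * ω p q ^ θ) := by
  induction hG : ({z ∈ F | p ≤ z ∧ z < q} : Finset ℝ) using Finset.strongInduction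
    generalizing p q with
  | H G ih =>
  subst hG
  have hC := (sewingConst_pos hθ).le
  rcases hpq.eq_or_lt with rfl | hlt
  · have hdiag := hΞ p p p le_rfl le_rfl le_rfl le_rfl
    rw [hω.self_eq_zero hp hq, Real.zero_rpow (by linarith)] at hdiag ⊢
    simpa [gridSum_self] using hdiag
  obtain ⟨a, haF, hpa, haq, hpaω, hbqω⟩ := hω.exists_mem_le_half hp hlt hq hpF hqF
  obtain ⟨⟨hbF, hab⟩, hmin⟩ := isLeast_gridSucc hqF haq
  have hbq : gridSucc F a ≤ q := hmin ⟨hqF, haq⟩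
  set b := gridSucc F a with hb
  have hpb : p < b := hpa.trans_lt hab
  have hpaω0 := hω.nonneg hp hpa (haq.le.trans hq)
  have hbqω0 := hω.nonneg (hp.trans hpb.le) hbq hq
  have haqω0 := hω.nonneg (hp.trans hpa) haq.le hq
  have haqω := hω.mono hp hpa haq.le le_rfl hq
  rw [← two_mul_sewingConst_mul_half_rpow_add hθ (hω.nonneg hp hpq hq) κ]
  refine norm_gridSum_sub_le_of_gridSucc haF hqF hpa haq hb.symm ?_ ?_
    (hΞ p a q le_rfl hpa haq.le le_rfl) ?_
  · refine (ih _ ?_ hp hpa (haq.le.trans hq) hpF haF (fun s u t hs hsu hut ht =>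
      hΞ s u t hs hsu hut (ht.trans haq.le)) rfl).trans (by gcongr)
    exact (Finset.ssubset_iff_of_subset (by grind)).2 ⟨a, by grind, by simp⟩
  · refine (ih _ ?_ (hp.trans hpb.le) hbq hq hbF hqF (fun s u t hs hsu hut ht =>
      hΞ s u t (hpb.le.trans hs) hsu hut ht) rfl).trans (by gcongr)
    exact (Finset.ssubset_iff_of_subset (by grind)).2 ⟨p, by grind, by simp [hpb]⟩
  · exact (hΞ a b q hpa hab.le hbq le_rfl).trans (by gcongr)

end SewingEstimate

section SmallDefect

/-- The hypothesis on the defect `Ξ s t - Ξ s u - Ξ u t` that drives the sewing argument: it is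
at most an arbitrarily small multiple of `ω s t ^ θ` as soon as one of `ω s u`, `ω u t` is small
enough. -/
def HasSmallDefect {E : Type*} [SeminormedAddCommGroup E] (Ξ : ℝ → ℝ → E) (T : ℝ)
    (ω : ℝ → ℝ → ℝ) (θ : ℝ) : Prop :=
  ∀ κ > 0, ∃ δ > 0, ∀ s u t, 0 ≤ s → s ≤ u → u ≤ t → t ≤ T → min (ω s u) (ω u t) ≤ δ →
    ‖Ξ s t - Ξ s u - Ξ u t‖ ≤ κ * ω s t ^ θ

variable {E : Type*} [SeminormedAddCommGroup E] {Ξ : ℝ → ℝ → E} {T θ : ℝ} {ω : ℝ → ℝ → ℝ}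

theorem exists_eventually_norm_gridSum_sub_le_trans (hω : IsControl T ω) {s u t : ℝ} (hs : 0 ≤ s)
    (hsu : s ≤ u) (hut : u ≤ t) (ht : t ≤ T)
    (h₁ : ∃ K, ∀ᶠ F in atTop, ‖gridSum Ξ F s u - K‖ ≤ ω s u)
    (h₂ : ∃ K, ∀ᶠ F in atTop, ‖gridSum Ξ F u t - K‖ ≤ ω u t) :
    ∃ K, ∀ᶠ F in atTop, ‖gridSum Ξ F s t - K‖ ≤ ω s t := by
  obtain ⟨K₁, hK₁⟩ := h₁
  obtain ⟨K₂, hK₂⟩ := h₂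
  refine ⟨K₁ + K₂, ?_⟩
  filter_upwards [hK₁, hK₂] with F hF₁ hF₂
  rw [← gridSum_add_gridSum Ξ F hsu hut, add_sub_add_comm]
  exact (norm_add_le_of_le hF₁ hF₂).trans (hω.add_le hs hsu hut ht)

theorem eventually_norm_gridSum_sub_le (hω : IsControl T ω) {κ : ℝ} (hκ : 0 ≤ κ) (hθ : 1 < θ)
    {p q : ℝ} (hp : 0 ≤ p) (hpq : p ≤ q) (hq : q ≤ T)
    (hΞ : ∀ s u t, p ≤ s → s ≤ u → u ≤ t → t ≤ q → ‖Ξ s t - Ξ s u - Ξ u t‖ ≤ κ * ω s t ^ θ) :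
    ∀ᶠ F in atTop, ‖gridSum Ξ F p q - Ξ p q‖ ≤ sewingConst θ * (κ * ω p q ^ θ) := by
  filter_upwards [eventually_ge_atTop ({p, q} : Finset ℝ)] with F hF
  exact norm_gridSum_sub_le hω hκ hθ hp hpq hq (hF (by simp)) (hF (by simp)) hΞ

theorem HasSmallDefect.exists_eventually_norm_gridSum_sub_le (hΞ : HasSmallDefect Ξ T ω θ)
    (hω : IsControl T ω) (hθ : 1 < θ) {κ : ℝ} (hκ : 0 < κ) {s t : ℝ} (hs : 0 ≤ s) (hst : s ≤ t)
    (ht : t ≤ T) :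
    ∃ K, ∀ᶠ F in atTop, ‖gridSum Ξ F s t - K‖ ≤ sewingConst θ * (κ * ω s t ^ θ) := by
  obtain ⟨δ, hδ, hdefect⟩ := hΞ κ hκ
  have hw : IsControl T fun s t => sewingConst θ * (κ * ω s t ^ θ) :=
    ((hω.rpow hθ.le).const_mul hκ.le).const_mul (sewingConst_pos hθ).le
  refine interval_induction_of_eventually (a := s) (b := t)
    (Q := fun x y => ∃ K, ∀ᶠ F in atTop, ‖gridSum Ξ F x y - K‖ ≤ sewingConst θ * (κ * ω x y ^ θ))
    (fun x y z hx hxy hyz hz => exists_eventually_norm_gridSum_sub_le_trans hw (hs.trans hx) hxy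
      hyz (hz.trans ht)) ?_ (fun p hp => ?_) (fun p hp => ?_) hst
  · exact ⟨0, .of_forall fun F => by
      simpa [gridSum_self] using hw.nonneg hs le_rfl (hst.trans ht)⟩
  · have hp0 : 0 < p := hs.trans_lt hp.1
    have hpT : p ≤ T := hp.2.trans ht
    filter_upwards [hω.eventually_nhdsLT_min_le hp0 hpT hδ, Ioo_mem_nhdsLT hp0]
      with x hmin hx
    exact ⟨_, eventually_norm_gridSum_sub_le hω hκ.le hθ hx.1.le hx.2.le hpT
      fun s u t hxs hsu hut htp => hdefect s u t (hx.1.le.trans hxs) hsu hut (htp.trans hpT)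
        (hmin s u t hxs hsu hut htp)⟩
  · have hp0 : 0 ≤ p := hs.trans hp.1
    have hpT : p < T := hp.2.trans_le ht
    filter_upwards [hω.eventually_nhdsGT_min_le hp0 hpT hδ, Ioo_mem_nhdsGT hpT]
      with y hmin hy
    exact ⟨_, eventually_norm_gridSum_sub_le hω hκ.le hθ hp0 hy.1.le hy.2.le
      fun s u t hps hsu hut hty => hdefect s u t (hp0.trans hps) hsu hut (hty.trans hy.2.le)
        (hmin s u t hps hsu hut hty)⟩

theorem HasSmallDefect.exists_tendsto_gridSum [CompleteSpace E] (hΞ : HasSmallDefect Ξ T ω θ)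
    (hω : IsControl T ω) (hθ : 1 < θ) {s t : ℝ} (hs : 0 ≤ s) (hst : s ≤ t) (ht : t ≤ T) :
    ∃ K, Tendsto (fun F => gridSum Ξ F s t) atTop (𝓝 K) := by
  refine exists_tendsto_of_forall_exists_eventually_norm_sub_le fun ε hε => ?_
  obtain ⟨κ, hκ, hκε⟩ := exists_pos_mul_lt hε (sewingConst θ * ω s t ^ θ)
  obtain ⟨K, hK⟩ := hΞ.exists_eventually_norm_gridSum_sub_le hω hθ hκ hs hst ht
  exact ⟨K, hK.mono fun F hF => by linarith⟩

theorem sum_rpow_mul_rpow_le_of_min_le {ι : Type*} [Fintype ι] {ω₁ ω₂ : ι → ℝ → ℝ → ℝ}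
    {α₁ α₂ : ι → ℝ} (hω : IsControl T ω)
    (hω₁ : ∀ j s t, 0 ≤ s → s ≤ t → t ≤ T → ω₁ j s t ∈ Icc 0 (ω s t))
    (hω₂ : ∀ j s t, 0 ≤ s → s ≤ t → t ≤ T → ω₂ j s t ∈ Icc 0 (ω s t))
    {η : ℝ} (hη : 0 ≤ η) (hgap : ∀ j, η ≤ α₁ j ∧ η ≤ α₂ j ∧ 1 + 2 * η ≤ α₁ j + α₂ j)
    {s u t : ℝ} (hs : 0 ≤ s) (hsu : s ≤ u) (hut : u ≤ t) (ht : t ≤ T) {δ : ℝ}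
    (hδ : min (ω s u) (ω u t) ≤ δ) :
    ∑ j, ω₁ j s u ^ α₁ j * ω₂ j u t ^ α₂ j ≤
      (∑ j, ω 0 T ^ (α₁ j + α₂ j - 1 - 2 * η)) * δ ^ η * ω s t ^ (1 + η) := by
  rw [Finset.sum_mul, Finset.sum_mul]
  refine Finset.sum_le_sum fun j _ => ?_
  obtain ⟨hx, hxω⟩ := hω₁ j s u hs hsu (hut.trans ht)
  obtain ⟨hy, hyω⟩ := hω₂ j u t (hs.trans hsu) hut ht
  obtain ⟨ha, hb, hab⟩ := hgap j
  exact rpow_mul_rpow_le_of_min_le hx hy (hxω.trans (hω.mono hs le_rfl hsu hut ht))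
    (hyω.trans (hω.mono hs hsu hut le_rfl ht)) (hω.mono le_rfl hs (hsu.trans hut) ht le_rfl)
    ((min_le_min hxω hyω).trans hδ) hη ha hb hab

theorem exists_hasSmallDefect_of_le_sum_rpow_mul_rpow {ι : Type*} [Fintype ι]
    {ω₁ ω₂ : ι → ℝ → ℝ → ℝ} {α₁ α₂ : ι → ℝ}
    (hω₁ : ∀ j, IsControl T (ω₁ j)) (hω₂ : ∀ j, IsControl T (ω₂ j))
    (hα₁ : ∀ j, 0 < α₁ j) (hα₂ : ∀ j, 0 < α₂ j) (hα : ∀ j, 1 < α₁ j + α₂ j)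
    (hΞ : ∀ s u t : ℝ, 0 ≤ s → s ≤ u → u ≤ t → t ≤ T →
      ‖Ξ s t - Ξ s u - Ξ u t‖ ≤ ∑ j, ω₁ j s u ^ α₁ j * ω₂ j u t ^ α₂ j) :
    ∃ (ω : ℝ → ℝ → ℝ) (θ : ℝ), IsControl T ω ∧ 1 < θ ∧ HasSmallDefect Ξ T ω θ := by
  obtain ⟨η, hη, hgap⟩ := exists_uniform_exponent_gap hα₁ hα₂ hα
  set ω : ℝ → ℝ → ℝ := fun s t => ∑ j, (ω₁ j s t + ω₂ j s t)
  have hω : IsControl T ω := .sum _ fun j => (hω₁ j).add (hω₂ j)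
  have hle : ∀ j s t, 0 ≤ s → s ≤ t → t ≤ T → ω₁ j s t + ω₂ j s t ≤ ω s t :=
    fun j s t hs hst ht => Finset.single_le_sum (f := fun j => ω₁ j s t + ω₂ j s t)
      (fun i _ => ((hω₁ i).add (hω₂ i)).nonneg hs hst ht) (Finset.mem_univ j)
  refine ⟨ω, 1 + η, hω, by linarith, fun κ hκ => ?_⟩
  obtain ⟨δ, hδ, hδκ⟩ :=
    exists_pos_mul_rpow_le (∑ j, ω 0 T ^ (α₁ j + α₂ j - 1 - 2 * η)) hη hκ
  refine ⟨δ, hδ, fun s u t hs hsu hut ht hmin => (hΞ s u t hs hsu hut ht).trans ?_⟩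
  refine (sum_rpow_mul_rpow_le_of_min_le hω (fun j s t hs hst ht => ?_)
    (fun j s t hs hst ht => ?_) hη.le hgap hs hsu hut ht hmin).trans
    (mul_le_mul_of_nonneg_right hδκ (Real.rpow_nonneg (hω.nonneg hs (hsu.trans hut) ht) _))
  · have := (hω₂ j).nonneg hs hst ht
    exact ⟨(hω₁ j).nonneg hs hst ht, by linarith [hle j s t hs hst ht]⟩
  · have := (hω₁ j).nonneg hs hst ht
    exact ⟨(hω₂ j).nonneg hs hst ht, by linarith [hle j s t hs hst ht]⟩

end SmallDefect

theorem generalized_sewing_existence_general {E ι : Type*} [NormedAddCommGroup E]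
    [CompleteSpace E] [Fintype ι] {T : ℝ} {Ξ : ℝ → ℝ → E}
    {ω₁ ω₂ : ι → ℝ → ℝ → ℝ} {α₁ α₂ : ι → ℝ}
    (hω₁ : ∀ j, IsControl T (ω₁ j)) (hω₂ : ∀ j, IsControl T (ω₂ j))
    (hα₁ : ∀ j, 0 < α₁ j) (hα₂ : ∀ j, 0 < α₂ j) (hα : ∀ j, 1 < α₁ j + α₂ j)
    (hΞ : ∀ s u t : ℝ, 0 ≤ s → s ≤ u → u ≤ t → t ≤ T →
      ‖Ξ s t - Ξ s u - Ξ u t‖ ≤ ∑ j, ω₁ j s u ^ α₁ j * ω₂ j u t ^ α₂ j) :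
    ∃ I : ℝ → ℝ → E,
      (∀ s t : ℝ, 0 ≤ s → s < t → t ≤ T →
        HasRefinementLimit Ξ s t (I s t) ∧ ∀ K', HasRefinementLimit Ξ s t K' → K' = I s t) ∧
      (∀ t : ℝ, 0 ≤ t → t ≤ T → I t t = 0) ∧
      (∀ s u t : ℝ, 0 ≤ s → s ≤ u → u ≤ t → t ≤ T → I s t = I s u + I u t) := by
  obtain ⟨ω, θ, hω, hθ, hsmall⟩ :=
    exists_hasSmallDefect_of_le_sum_rpow_mul_rpow hω₁ hω₂ hα₁ hα₂ hα hΞ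
  set I : ℝ → ℝ → E := fun s t => limUnder atTop fun F => gridSum Ξ F s t
  have hI : ∀ {s t}, 0 ≤ s → s ≤ t → t ≤ T →
      Tendsto (fun F => gridSum Ξ F s t) atTop (𝓝 (I s t)) := fun hs hst ht =>
    tendsto_nhds_limUnder (hsmall.exists_tendsto_gridSum hω hθ hs hst ht)
  refine ⟨I, fun s t hs hst ht => ⟨?_, fun K' hK' => ?_⟩, fun t ht0 ht => ?_,
    fun s u t hs hsu hut ht => ?_⟩
  · exact (hasRefinementLimit_iff_tendsto_gridSum hst.le).2 (hI hs hst.le ht)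
  · exact tendsto_nhds_unique ((hasRefinementLimit_iff_tendsto_gridSum hst.le).1 hK')
      (hI hs hst.le ht)
  · refine tendsto_nhds_unique (hI ht0 le_rfl ht) ?_
    simpa only [gridSum_self] using tendsto_const_nhds
  · refine tendsto_nhds_unique (hI hs (hsu.trans hut) ht) ?_
    simpa only [gridSum_add_gridSum Ξ _ hsu hut] using
      (hI hs hsu (hut.trans ht)).add (hI (hs.trans hsu) hut ht)

/-- generalized sewing lemma: existence and additivity. -/
theorem generalized_sewing_existence (T : ℝ) (hT : 0 < T) (e : ℕ) (he : 1 ≤ e)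
    (Ξ : ℝ → ℝ → Fin e → ℝ) (n : ℕ)
    (ω₁ ω₂ : Fin n → ℝ → ℝ → ℝ) (α₁ α₂ : Fin n → ℝ)
    (hω₁ : ∀ j, IsControl T (ω₁ j)) (hω₂ : ∀ j, IsControl T (ω₂ j))
    (hα₁ : ∀ j, 0 < α₁ j) (hα₂ : ∀ j, 0 < α₂ j)
    (hα : ∀ j, 1 < α₁ j + α₂ j)
    (hΞ : ∀ s u t : ℝ, 0 ≤ s → s ≤ u → u ≤ t → t ≤ T →
      ‖Ξ s t - Ξ s u - Ξ u t‖ ≤ ∑ j : Fin n, ω₁ j s u ^ α₁ j * ω₂ j u t ^ α₂ j) :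
    ∃ I : ℝ → ℝ → Fin e → ℝ,
      (∀ s t : ℝ, 0 ≤ s → s < t → t ≤ T →
        RRSLim Ξ s t (I s t) ∧ ∀ K' : Fin e → ℝ, RRSLim Ξ s t K' → K' = I s t) ∧
      (∀ t : ℝ, 0 ≤ t → t ≤ T → I t t = 0) ∧
      (∀ s u t : ℝ, 0 ≤ s → s ≤ u → u ≤ t → t ≤ T → I s t = I s u + I u t) :=
  generalized_sewing_existence_general hω₁ hω₂ hα₁ hα₂ hα hΞ
end

section
/- Let H be a bialgebra over ℝ with comultiplication Δ : H → H ⊗ H and unit element 1 ∈ H. For linear functionals f, g : H → ℝ define the convolution f ⋆ g : H → ℝ by (f ⋆ g)(x) := (f ⊗ g)(Δ x). Let L : H → H be a linear map satisfying the cocycle condition Δ(L x) = (id_H ⊗ L)(Δ x) + (L x) ⊗ 1 for all x ∈ H. Let e ≥ 1, let Z_s, Z_u ∈ H^e, and let X_su, X_ut, X_st : H → ℝ be linear functionals with X_ut(1) = 1 and satisfying Chen's relation X_st = X_su ⋆ X_ut. Define Ξ_su := X_su(L Z_s), Ξ_ut := X_ut(L Z_u), Ξ_st := X_st(L Z_s)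 ∈ ℝ^e (all maps applied componentwise). Then Ξ_su + Ξ_ut − Ξ_st = (X_ut ∘ L)(Z_u) − (X_su ⋆ (X_ut ∘ L))(Z_s). Equivalently, defining T_su : H → H by T_su := (X_su ⊗ id_H) ∘ Δ (composed with the canonical isomorphism ℝ ⊗ H ≅ H) and the remainder R_su := Z_u − T_su(Z_s) ∈ H^e, one has Ξ_su + Ξ_ut − Ξ_st = X_ut(L(R_su)). -/
open TensorProduct

/-- Convolution of linear functionals on a bialgebra: `(f ⋆ g)(x) = (f ⊗ g)(Δ x)`. -/
noncomputable def conv {H : Type*} [Ring H] [Bialgebra ℝ H]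
    (f g : H →ₗ[ℝ] ℝ) : H →ₗ[ℝ] ℝ :=
  (TensorProduct.lid ℝ ℝ).toLinearMap ∘ₗ TensorProduct.map f g ∘ₗ Coalgebra.comul

/-- The transpose operator `T_su := (X_su ⊗ id) ∘ Δ` (composed with `ℝ ⊗ H ≅ H`). -/
noncomputable def transOp {H : Type*} [Ring H] [Bialgebra ℝ H]
    (f : H →ₗ[ℝ] ℝ) : H →ₗ[ℝ] H :=
  (TensorProduct.lid ℝ H).toLinearMap ∘ₗ TensorProduct.map f LinearMap.id ∘ₗ Coalgebra.comul

open WithConv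

/-!
The cocycle condition says that `L` commutes with the contraction `T f = (f ⊗ id) ∘ Δ` up to a
multiple of the unit: `T f (L x) = L (T f x) + f (L x) • 1`. Since `f ⋆ g = g ∘ T f`, applying a
functional `g` with `g 1 = 1` turns this into `(f ⋆ g) (L x) = (f ⋆ (g ∘ L)) x + f (L x)`, so that
the two terms `X_su (L Z_s)` cancel in the increment.
-/

section Contraction

variable {R C M : Type*} [CommSemiring R] [AddCommMonoid C] [Module R C] [CoalgebraStruct R C]
  [AddCommMonoid M] [Module R M]

/-- The left contraction `(f ⊗ id) ∘ Δ` of the comultiplication by a functional `f`, composed with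
`R ⊗ C ≅ C`: the operator `transOp` over an arbitrary coefficient semiring. Dually, it is
left convolution by `f`. -/
noncomputable def contractComul (f : C →ₗ[R] R) : C →ₗ[R] C :=
  (TensorProduct.lid R C).toLinearMap ∘ₗ TensorProduct.map f LinearMap.id ∘ₗ Coalgebra.comul

theorem lid_map_comul (f : C →ₗ[R] R) (g : C →ₗ[R] M) (x : C) :
    TensorProduct.lid R M (TensorProduct.map f g (Coalgebra.comul x)) = g (contractComul f x) :=
  LinearMap.congr_fun (CoassocSimps.lid_comp_map f g) (Coalgebra.comul x)

theorem convMul_apply_eq_apply_contractComul (f g : C →ₗ[R] R) (x : C) :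
    (toConv f * toConv g) x = g (contractComul f x) :=
  lid_map_comul f g x

/-- The cocycle condition `Δ (L x) = (id ⊗ L) (Δ x) + L x ⊗ u` for a linear endomorphism `L`. The
element `u` plays the part of the unit of a bialgebra. -/
def IsCocycle (L : C →ₗ[R] C) (u : C) : Prop :=
  ∀ x : C, Coalgebra.comul (R := R) (L x) =
    TensorProduct.map LinearMap.id L (Coalgebra.comul (R := R) x) + L x ⊗ₜ[R] u

namespace IsCocycle

variable {L : C →ₗ[R] C} {u : C}

theorem contractComul_apply (hL : IsCocycle L u) (f : C →ₗ[R] R) (x : C) :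
    contractComul f (L x) = L (contractComul f x) + f (L x) • u := by
  rw [← lid_map_comul f L x]
  simp [contractComul, hL x, TensorProduct.map_map]

theorem convMul_apply (hL : IsCocycle L u) (f g : C →ₗ[R] R) (x : C) :
    (toConv f * toConv g) (L x) = (toConv f * toConv (g ∘ₗ L)) x + f (L x) * g u := by
  simp only [convMul_apply_eq_apply_contractComul, hL.contractComul_apply, map_add, map_smul,
    smul_eq_mul, LinearMap.comp_apply]

end IsCocycle

end Contraction

theorem chen_increment_identity_general {R C : Type*} [CommRing R] [AddCommGroup C] [Module R C]
    [CoalgebraStruct R C] {L : C →ₗ[R] C} {u : C} (hL : IsCocycle L u) (zs zu : C)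
    {Xsu Xut Xst : C →ₗ[R] R} (hXut : Xut u = 1) (hChen : Xst = (toConv Xsu * toConv Xut).ofConv) :
    Xsu (L zs) + Xut (L zu) - Xst (L zs) =
        Xut (L zu) - (toConv Xsu * toConv (Xut ∘ₗ L)) zs ∧
      Xsu (L zs) + Xut (L zu) - Xst (L zs) = Xut (L (zu - contractComul Xsu zs)) := by
  have chen_apply : Xst (L zs) = (toConv Xsu * toConv (Xut ∘ₗ L)) zs + Xsu (L zs) := by
    rw [hChen, hL.convMul_apply, hXut, mul_one]
  have increment : Xsu (L zs) + Xut (L zu) - Xst (L zs) =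
      Xut (L zu) - (toConv Xsu * toConv (Xut ∘ₗ L)) zs := by
    rw [chen_apply]
    ring
  refine ⟨increment, increment.trans ?_⟩
  rw [convMul_apply_eq_apply_contractComul, LinearMap.comp_apply, map_sub, map_sub]

section RealBialgebra

variable {H : Type*} [Ring H] [Bialgebra ℝ H]

theorem conv_eq_ofConv_mul (f g : H →ₗ[ℝ] ℝ) : conv f g = (toConv f * toConv g).ofConv :=
  rfl

theorem transOp_eq_contractComul (f : H →ₗ[ℝ] ℝ) : transOp f = contractComul f :=
  rfl

end RealBialgebra

/-- algebraic Chen-type identity for the increments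
`Ξ_su = X_su(L Z_s)`, `Ξ_ut = X_ut(L Z_u)`, `Ξ_st = X_st(L Z_s)`, given the cocycle
condition on `L`, `X_ut(1) = 1` and Chen's relation `X_st = X_su ⋆ X_ut`. -/
theorem chen_increment_identity {H : Type*} [Ring H] [Bialgebra ℝ H]
    (L : H →ₗ[ℝ] H)
    (hL : ∀ x : H, Coalgebra.comul (R := ℝ) (L x)
        = TensorProduct.map LinearMap.id L (Coalgebra.comul (R := ℝ) x) + (L x) ⊗ₜ[ℝ] 1)
    (e : ℕ) (he : 1 ≤ e) (Zs Zu : Fin e → H)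
    (Xsu Xut Xst : H →ₗ[ℝ] ℝ)
    (hXut1 : Xut 1 = 1) (hChen : Xst = conv Xsu Xut) :
    (∀ i : Fin e,
      Xsu (L (Zs i)) + Xut (L (Zu i)) - Xst (L (Zs i))
        = Xut (L (Zu i)) - conv Xsu (Xut ∘ₗ L) (Zs i)) ∧
    (∀ i : Fin e,
      Xsu (L (Zs i)) + Xut (L (Zu i)) - Xst (L (Zs i))
        = Xut (L (Zu i - transOp Xsu (Zs i)))) := by
  simp only [← forall_and, transOp_eq_contractComul, conv_eq_ofConv_mul] at hChen ⊢
  exact fun i => chen_increment_identity_general hL (Zs i) (Zu i) hXut1 hChen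
end

section
/- Let V be a normed real vector space, N ∈ ℕ, and let π_0, …, π_N : V → V be linear maps with π_0 + ⋯ + π_N = id_V. Let T > 0, let ω be a control on [0,T], let γ > 0, and let C_X, C_R ≥ 0. For each (s,t) ∈ Δ_T let T_{s,t} : V → V be a linear map admitting a decomposition T_{s,t} = Σ_{j=0}^N T^j_{s,t} into linear maps with ‖T^j_{s,t}(x)‖ ≤ C_X · ω(s,t)^{jγ} · ‖x‖ for all x ∈ V and all j. Let Z : [0,T] → V and define, for (s,t) ∈ Δ_T, the remainder R_{s,t} := Z_t − T_{s,t}(Z_s); assume ‖π_j(R_{s,t})‖ ≤ C_R · ω(s,t)^{(N−j)γ} for all j = 0, …, N and all (s,t) ∈ Δ_T. Then sup_{t ∈ [0,T]} ‖Z_t‖ ≤ (N+1) · K(T)^N · (1 + C_X) · (‖Z_0‖ + C_R), where K(T) := max(1, ω(0,T))^γ. -/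
/-!
Every exponent `c * γ` in the hypotheses has `0 ≤ c ≤ N`, and a control is largest on the whole
interval, so `K ^ N` with `K = max 1 (ω 0 T) ^ γ` dominates each power of `ω s t` that occurs.
Splitting `Z t` into the transported value of `Z s` and the remainder, each of the two is a sum of
`N + 1` terms bounded in this way.
-/

theorem IsControl.mono_s13 {T : ℝ} {ω : ℝ → ℝ → ℝ} (hω : IsControl T ω) {a s t b : ℝ}
    (ha : 0 ≤ a) (has : a ≤ s) (hst : s ≤ t) (htb : t ≤ b) (hbT : b ≤ T) :
    ω s t ≤ ω a b := by
  obtain ⟨nonneg, -, superadd⟩ := hω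
  have htT : t ≤ T := htb.trans hbT
  calc ω s t ≤ ω a s + ω s t := le_add_of_nonneg_left (nonneg a s ha has (hst.trans htT))
    _ ≤ ω a t := superadd a s t ha has hst htT
    _ ≤ ω a t + ω t b :=
        le_add_of_nonneg_right (nonneg t b (ha.trans (has.trans hst)) htb hbT)
    _ ≤ ω a b := superadd a t b ha (has.trans hst) htb hbT

theorem rpow_mul_le_max_one_rpow_pow {x M c γ : ℝ} {N : ℕ} (hx : 0 ≤ x) (hxM : x ≤ M)
    (hγ : 0 ≤ γ) (hc : 0 ≤ c) (hcN : c ≤ N) :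
    x ^ (c * γ) ≤ (max 1 M ^ γ) ^ N :=
  calc x ^ (c * γ) ≤ max 1 M ^ (c * γ) :=
        Real.rpow_le_rpow hx (hxM.trans (le_max_right 1 M)) (mul_nonneg hc hγ)
    _ ≤ max 1 M ^ (γ * N) :=
        Real.rpow_le_rpow_of_exponent_le (le_max_left 1 M)
          ((mul_comm c γ).trans_le (mul_le_mul_of_nonneg_left hcN hγ))
    _ = (max 1 M ^ γ) ^ N := Real.rpow_mul_natCast (by positivity) γ N

section SeminormedGroup

variable {V : Type*} [SeminormedAddCommGroup V]

theorem norm_sum_le_of_norm_le_mul_rpow {ι : Type*} [Fintype ι] {f : ι → V} {c : ι → ℝ}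
    {C x M γ : ℝ} {N : ℕ} (hC : 0 ≤ C) (hx : 0 ≤ x) (hxM : x ≤ M) (hγ : 0 ≤ γ)
    (hc : ∀ i, 0 ≤ c i) (hcN : ∀ i, c i ≤ N) (hf : ∀ i, ‖f i‖ ≤ C * x ^ (c i * γ)) :
    ‖∑ i, f i‖ ≤ Fintype.card ι * (C * (max 1 M ^ γ) ^ N) :=
  calc ‖∑ i, f i‖ ≤ ∑ _i : ι, C * (max 1 M ^ γ) ^ N :=
        norm_sum_le_of_le _ fun i _ => (hf i).trans <| mul_le_mul_of_nonneg_left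
          (rpow_mul_le_max_one_rpow_pow hx hxM hγ (hc i) (hcN i)) hC
    _ = Fintype.card ι * (C * (max 1 M ^ γ) ^ N) := by
        rw [Finset.sum_const, Finset.card_univ, nsmul_eq_mul]

theorem controlled_path_sup_bound_general {N : ℕ} {π : Fin (N + 1) → V → V}
    (hπ : ∀ x, ∑ j, π j x = x) {T : ℝ} {ω : ℝ → ℝ → ℝ} (hω : IsControl T ω)
    {γ : ℝ} (hγ : 0 ≤ γ) {CX CR : ℝ} (hCX : 0 ≤ CX) (hCR : 0 ≤ CR)
    {Φ : ℝ → ℝ → Fin (N + 1) → V → V}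
    (hΦ : ∀ s t : ℝ, 0 ≤ s → s ≤ t → t ≤ T → ∀ (j : Fin (N + 1)) (x : V),
      ‖Φ s t j x‖ ≤ CX * ω s t ^ ((j : ℕ) * γ) * ‖x‖)
    {Z : ℝ → V}
    (hR : ∀ s t : ℝ, 0 ≤ s → s ≤ t → t ≤ T → ∀ j : Fin (N + 1),
      ‖π j (Z t - ∑ i, Φ s t i (Z s))‖ ≤ CR * ω s t ^ (((N : ℝ) - (j : ℕ)) * γ))
    {s t : ℝ} (hs : 0 ≤ s) (hst : s ≤ t) (htT : t ≤ T) :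
    ‖Z t‖ ≤ ((N : ℝ) + 1) * (max 1 (ω 0 T) ^ γ) ^ N * (CX * ‖Z s‖ + CR) := by
  have hω_nonneg : 0 ≤ ω s t := hω.1 s t hs hst htT
  have hω_le : ω s t ≤ ω 0 T := hω.mono_s13 le_rfl hs hst htT le_rfl
  have index_le (j : Fin (N + 1)) : ((j : ℕ) : ℝ) ≤ N := mod_cast j.is_le
  have transported_le : ‖∑ j, Φ s t j (Z s)‖ ≤
      Fintype.card (Fin (N + 1)) * (CX * ‖Z s‖ * (max 1 (ω 0 T) ^ γ) ^ N) :=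
    norm_sum_le_of_norm_le_mul_rpow (by positivity) hω_nonneg hω_le hγ
      (fun j => Nat.cast_nonneg (j : ℕ)) index_le
      fun j => (hΦ s t hs hst htT j (Z s)).trans_eq (mul_right_comm _ _ _)
  have remainder_le : ‖Z t - ∑ j, Φ s t j (Z s)‖ ≤
      Fintype.card (Fin (N + 1)) * (CR * (max 1 (ω 0 T) ^ γ) ^ N) := by
    rw [← hπ (Z t - _)]
    exact norm_sum_le_of_norm_le_mul_rpow hCR hω_nonneg hω_le hγ
      (fun j => sub_nonneg.2 (index_le j)) (fun j => sub_le_self _ (Nat.cast_nonneg (j : ℕ)))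
      (hR s t hs hst htT)
  rw [Fintype.card_fin, Nat.cast_succ] at transported_le remainder_le
  calc ‖Z t‖ ≤ ‖Z t - ∑ j, Φ s t j (Z s)‖ + ‖∑ j, Φ s t j (Z s)‖ := norm_le_norm_sub_add _ _
    _ ≤ _ := add_le_add remainder_le transported_le
    _ = _ := by ring

end SeminormedGroup

/-- supremum-norm bound for a "controlled path" `Z` in terms of its
initial value and the remainder bound:
`sup_{t ∈ [0,T]} ‖Z_t‖ ≤ (N+1) K(T)^N (1 + C_X)(‖Z_0‖ + C_R)` with
`K(T) = max(1, ω(0,T))^γ`. -/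
theorem controlled_path_sup_bound {V : Type*} [NormedAddCommGroup V] [NormedSpace ℝ V]
    (N : ℕ) (π : Fin (N + 1) → V →ₗ[ℝ] V) (hπ : ∑ j, π j = LinearMap.id)
    (T : ℝ) (hT : 0 < T) (ω : ℝ → ℝ → ℝ) (hω : IsControl T ω) (γ : ℝ) (hγ : 0 < γ)
    (CX CR : ℝ) (hCX : 0 ≤ CX) (hCR : 0 ≤ CR)
    (Tst : ℝ → ℝ → V →ₗ[ℝ] V) (Tj : ℝ → ℝ → Fin (N + 1) → V →ₗ[ℝ] V)
    (hdecomp : ∀ s t : ℝ, 0 ≤ s → s ≤ t → t ≤ T → Tst s t = ∑ j, Tj s t j)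
    (hTj : ∀ s t : ℝ, 0 ≤ s → s ≤ t → t ≤ T → ∀ (j : Fin (N + 1)) (x : V),
      ‖Tj s t j x‖ ≤ CX * ω s t ^ ((j : ℕ) * γ) * ‖x‖)
    (Z : ℝ → V)
    (hR : ∀ s t : ℝ, 0 ≤ s → s ≤ t → t ≤ T → ∀ j : Fin (N + 1),
      ‖π j (Z t - Tst s t (Z s))‖ ≤ CR * ω s t ^ (((N : ℝ) - (j : ℕ)) * γ)) :
    ∀ t : ℝ, 0 ≤ t → t ≤ T →
      ‖Z t‖ ≤ ((N : ℝ) + 1) * (max 1 (ω 0 T) ^ γ) ^ N * (1 + CX) * (‖Z 0‖ + CR) := by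
  intro t ht htT
  have hR_sum : ∀ s t : ℝ, 0 ≤ s → s ≤ t → t ≤ T → ∀ j : Fin (N + 1),
      ‖π j (Z t - ∑ i, Tj s t i (Z s))‖ ≤ CR * ω s t ^ (((N : ℝ) - (j : ℕ)) * γ) :=
    fun s t hs hst htT => by
      simpa only [hdecomp s t hs hst htT, LinearMap.sum_apply] using hR s t hs hst htT
  calc ‖Z t‖ ≤ ((N : ℝ) + 1) * (max 1 (ω 0 T) ^ γ) ^ N * (CX * ‖Z 0‖ + CR) :=
        controlled_path_sup_bound_general (π := fun j => π j) (Φ := fun s t j => Tj s t j)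
          (fun x => by rw [← LinearMap.sum_apply, hπ, LinearMap.id_apply])
          hω hγ.le hCX hCR hTj hR_sum le_rfl ht htT
    _ ≤ ((N : ℝ) + 1) * (max 1 (ω 0 T) ^ γ) ^ N * ((1 + CX) * (‖Z 0‖ + CR)) := by
        gcongr
        linarith [norm_nonneg (Z 0), mul_nonneg hCX hCR]
    _ = _ := (mul_assoc _ _ _).symm
end
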